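/- Squashed entanglement is subadditive on tensor products: for any states ρ^{AB} on H_A ⊗ H_B and ρ^{A'B'} on H_{A'} ⊗ H_{B'}, one has E_sq(ρ^{AB} ⊗ ρ^{A'B'}) ≤ E_sq(ρ^{AB}) + E_sq(ρ^{A'B'}), where the tensor product state is regarded as a bipartite state with respect to the cut AA' versus BB'. -/

import Mathlib

open Matrix BigOperators Kronecker
open scoped Classical ComplexOrder

noncomputable section

/-- A (quantum) state: positive semidefinite matrix of trace 1. -/
def IsState {n : Type*} [Fintype n] (ρ : Matrix n n ℂ) : Prop :=
  ρ.PosSemidef ∧ ρ.trace = 1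

/-- Von Neumann entropy (base 2), via the eigenvalues of a Hermitian matrix. -/
def vonNeumannEntropy {n : Type*} [Fintype n] (ρ : Matrix n n ℂ) : ℝ :=
  if h : ρ.IsHermitian then ∑ i, -(h.eigenvalues i * Real.logb 2 (h.eigenvalues i)) else 0

/-- Partial trace over the second (right) factor. -/
def ptraceR {A B : Type*} [Fintype A] [Fintype B]
    (ρ : Matrix (A × B) (A × B) ℂ) : Matrix A A ℂ :=
  fun i j => ∑ b, ρ (i, b) (j, b)

/-- Partial trace over the first (left) factor. -/
def ptraceL {A B : Type*} [Fintype A] [Fintype B]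
    (ρ : Matrix (A × B) (A × B) ℂ) : Matrix B B ℂ :=
  fun i j => ∑ a, ρ (a, i) (a, j)

variable {A B E : Type*} [Fintype A] [Fintype B] [Fintype E]

/-- Marginal of a tripartite state on `A × E` (trace out `B`). -/
def margAE (ρ : Matrix (A × B × E) (A × B × E) ℂ) : Matrix (A × E) (A × E) ℂ :=
  fun x y => ∑ b, ρ (x.1, b, x.2) (y.1, b, y.2)

/-- Marginal of a tripartite state on `B × E` (trace out `A`). -/
def margBE (ρ : Matrix (A × B × E) (A × B × E) ℂ) : Matrix (B × E) (B × E) ℂ :=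
  fun x y => ∑ a, ρ (a, x.1, x.2) (a, y.1, y.2)

/-- Marginal of a tripartite state on `E` (trace out `A` and `B`). -/
def margE (ρ : Matrix (A × B × E) (A × B × E) ℂ) : Matrix E E ℂ :=
  fun x y => ∑ a, ∑ b, ρ (a, b, x) (a, b, y)

/-- Marginal of a tripartite state on `A × B` (trace out `E`). -/
def margAB (ρ : Matrix (A × B × E) (A × B × E) ℂ) : Matrix (A × B) (A × B) ℂ :=
  fun x y => ∑ e, ρ (x.1, x.2, e) (y.1, y.2, e)

/-- Quantum conditional mutual information `I(A;B|E) = S(AE)+S(BE)-S(ABE)-S(E)`. -/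
def condMutualInfo (ρ : Matrix (A × B × E) (A × B × E) ℂ) : ℝ :=
  vonNeumannEntropy (margAE ρ) + vonNeumannEntropy (margBE ρ)
    - vonNeumannEntropy ρ - vonNeumannEntropy (margE ρ)

/-- Squashed entanglement: infimum of `(1/2) I(A;B|E)` over all finite-dimensional
extensions of `ρ`. -/
def Esq {A B : Type*} [Fintype A] [Fintype B] (ρ : Matrix (A × B) (A × B) ℂ) : ℝ :=
  sInf { x : ℝ | ∃ (d : ℕ) (ρE : Matrix (A × B × Fin d) (A × B × Fin d) ℂ),
    IsState ρE ∧ margAB ρE = ρ ∧ x = (1 / 2) * condMutualInfo ρE }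

/-- Outer product `|ψ⟩⟨ψ|`. -/
def outer {n : Type*} (ψ : n → ℂ) : Matrix n n ℂ :=
  Matrix.vecMulVec ψ (star ψ)

/-- Trace norm of a Hermitian matrix: sum of the absolute values of its eigenvalues. -/
def traceNorm {n : Type*} [Fintype n] (X : Matrix n n ℂ) : ℝ :=
  if h : X.IsHermitian then ∑ i, |h.eigenvalues i| else 0

/-- Entanglement of formation: infimum of average entanglement entropy over all
finite pure-state ensembles for `ρ`. -/
def EoF {A B : Type*} [Fintype A] [Fintype B] (ρ : Matrix (A × B) (A × B) ℂ) : ℝ :=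
  sInf { x : ℝ | ∃ (n : ℕ) (p : Fin n → ℝ) (ψ : Fin n → A × B → ℂ),
    (∀ k, 0 ≤ p k) ∧ (∑ k, p k) = 1 ∧ (∀ k, ∑ i, ‖ψ k i‖ ^ 2 = 1) ∧
    (∑ k, (p k : ℂ) • outer (ψ k)) = ρ ∧
    x = ∑ k, p k * vonNeumannEntropy (ptraceR (outer (ψ k))) }

/-- The function `η` : `η(x) = -x log₂ x` for `x ≤ 1/4`, `1/2` otherwise. -/
def eta (x : ℝ) : ℝ := if x ≤ 1 / 4 then -(x * Real.logb 2 x) else 1 / 2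

/-!
The tensor product of an extension of `ρ` with an extension of `ρ'` is, after reordering the
factors, an extension of `ρ ⊗ ρ'`, and its conditional mutual information is the sum of the two,
because entropies are additive on tensor products.  Hence the set of values whose infimum is
`E_sq(ρ ⊗ ρ')` contains the sum of the sets for `ρ` and `ρ'`.

Passing to infima of real numbers requires these sets to be bounded below.  Strong subadditivity
would give the bound `0`, but the weaker bound `-2 log |A|` on `I(A;B|E)` is enough and elementary:
it follows from `S(ABE) ≤ S(BE) + log |A|` and `S(E) ≤ S(AE) + log |A|`.  The first inequality
compares `ρ` with its diagonal in a basis that diagonalizes the marginal; the second is the first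
one applied to the complementary marginal of a purification.
-/

section Entropy

variable {m n : Type*}

lemma isHermitian_diagonal_ofReal [DecidableEq n] (d : n → ℝ) :
    (diagonal fun i => (d i : ℂ)).IsHermitian :=
  isHermitian_diagonal_of_self_adjoint _ (funext fun i => Complex.conj_ofReal (d i))

lemma isHermitian_kronecker {ρ : Matrix m m ℂ} {σ : Matrix n n ℂ} (hρ : ρ.IsHermitian)
    (hσ : σ.IsHermitian) : (ρ ⊗ₖ σ).IsHermitian := by
  rw [IsHermitian, conjTranspose_kronecker, hρ.eq, hσ.eq]

variable [Fintype m] [Fintype n]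

lemma vonNeumannEntropy_eq_sum_eigenvalues {ρ : Matrix n n ℂ} (h : ρ.IsHermitian) :
    vonNeumannEntropy ρ = (∑ i, (h.eigenvalues i).negMulLog) / Real.log 2 := by
  rw [vonNeumannEntropy, dif_pos h, Finset.sum_div]
  refine Finset.sum_congr rfl fun i _ => ?_
  rw [Real.negMulLog, Real.logb, neg_mul, neg_div, mul_div_assoc]

lemma vonNeumannEntropy_eq_sum_roots_charpoly [DecidableEq n] {ρ : Matrix n n ℂ}
    (h : ρ.IsHermitian) :
    vonNeumannEntropy ρ = (ρ.charpoly.roots.map fun z => z.re.negMulLog).sum / Real.log 2 := by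
  rw [vonNeumannEntropy_eq_sum_eigenvalues h, h.roots_charpoly_eq_eigenvalues, Multiset.map_map]
  congr!

lemma vonNeumannEntropy_submatrix {ρ : Matrix n n ℂ} (h : ρ.IsHermitian) (e : m ≃ n) :
    vonNeumannEntropy (ρ.submatrix e e) = vonNeumannEntropy ρ := by
  rw [vonNeumannEntropy_eq_sum_roots_charpoly h,
    vonNeumannEntropy_eq_sum_roots_charpoly (h.submatrix e), ← charpoly_reindex e.symm ρ]
  rfl

lemma vonNeumannEntropy_mul_conjTranspose_self (X : Matrix m n ℂ) :
    vonNeumannEntropy (X * Xᴴ) = vonNeumannEntropy (Xᴴ * X) := by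
  rw [vonNeumannEntropy_eq_sum_roots_charpoly (isHermitian_mul_conjTranspose_self X),
    vonNeumannEntropy_eq_sum_roots_charpoly (isHermitian_conjTranspose_mul_self X)]
  congr 1
  -- The two spectra differ only in the multiplicity of `0`, where `negMulLog` vanishes.
  have hroots := congrArg Polynomial.roots (charpoly_mul_comm' X Xᴴ)
  have hne (k : ℕ) {p : Polynomial ℂ} (hp : p.Monic) : Polynomial.X ^ k * p ≠ 0 :=
    ((Polynomial.monic_X_pow k).mul hp).ne_zero
  rw [Polynomial.roots_mul (hne _ (charpoly_monic _)),
    Polynomial.roots_mul (hne _ (charpoly_monic _))] at hroots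
  simpa [Multiset.map_nsmul, Multiset.sum_nsmul] using
    congrArg (fun s => (s.map fun z : ℂ => z.re.negMulLog).sum) hroots

lemma vonNeumannEntropy_diagonal [DecidableEq n] (d : n → ℝ) :
    vonNeumannEntropy (diagonal fun i => (d i : ℂ)) =
      (∑ i, (d i).negMulLog) / Real.log 2 := by
  have hroots : (diagonal fun i => (d i : ℂ)).charpoly.roots =
      Finset.univ.val.map fun i => (d i : ℂ) := by
    rw [charpoly_diagonal, Polynomial.roots_prod _ _
      (Finset.prod_ne_zero_iff.mpr fun i _ => Polynomial.X_sub_C_ne_zero _)]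
    simp only [Polynomial.roots_X_sub_C, Multiset.bind_singleton]
  rw [vonNeumannEntropy_eq_sum_roots_charpoly (isHermitian_diagonal_ofReal d), hroots,
    Multiset.map_map]
  rfl

lemma vonNeumannEntropy_unitary_conj [DecidableEq n] {ρ U : Matrix n n ℂ} (h : ρ.IsHermitian)
    (hU : U ∈ unitaryGroup n ℂ) : vonNeumannEntropy (U * ρ * star U) = vonNeumannEntropy ρ := by
  rw [star_eq_conjTranspose, vonNeumannEntropy_eq_sum_roots_charpoly h,
    vonNeumannEntropy_eq_sum_roots_charpoly (isHermitian_mul_mul_conjTranspose U h),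
    charpoly_mul_comm, ← Matrix.mul_assoc, ← star_eq_conjTranspose,
    mem_unitaryGroup_iff'.mp hU, Matrix.one_mul]

lemma kronecker_eq_unitary_conj_diagonal {ρ : Matrix m m ℂ} {σ : Matrix n n ℂ}
    (hρ : ρ.IsHermitian) (hσ : σ.IsHermitian) :
    ∃ U ∈ unitaryGroup (m × n) ℂ, ρ ⊗ₖ σ =
      U * diagonal (fun i => ((hρ.eigenvalues i.1 * hσ.eigenvalues i.2 : ℝ) : ℂ)) * star U := by
  refine ⟨_, kronecker_mem_unitary hρ.eigenvectorUnitary.2 hσ.eigenvectorUnitary.2, ?_⟩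
  conv_lhs => rw [hρ.spectral_theorem, hσ.spectral_theorem]
  simp only [Unitary.conjStarAlgAut_apply, mul_kronecker_mul, diagonal_kronecker_diagonal,
    star_eq_conjTranspose, conjTranspose_kronecker, Function.comp_apply, Complex.ofReal_mul,
    Complex.coe_algebraMap]

theorem vonNeumannEntropy_kronecker {ρ : Matrix m m ℂ} {σ : Matrix n n ℂ} (hρ : ρ.IsHermitian)
    (hσ : σ.IsHermitian) :
    vonNeumannEntropy (ρ ⊗ₖ σ) =
      σ.trace.re * vonNeumannEntropy ρ + ρ.trace.re * vonNeumannEntropy σ := by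
  obtain ⟨U, hU, hρσ⟩ := kronecker_eq_unitary_conj_diagonal hρ hσ
  rw [hρσ, vonNeumannEntropy_unitary_conj (isHermitian_diagonal_ofReal _) hU,
    vonNeumannEntropy_diagonal, vonNeumannEntropy_eq_sum_eigenvalues hρ,
    vonNeumannEntropy_eq_sum_eigenvalues hσ,
    hρ.trace_eq_sum_eigenvalues, hσ.trace_eq_sum_eigenvalues]
  simp only [Fintype.sum_prod_type, Real.negMulLog_mul, Finset.sum_add_distrib, ← Finset.sum_mul,
    ← Finset.mul_sum, Complex.re_sum, Complex.coe_algebraMap, Complex.ofReal_re]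
  ring

end Entropy

section Schur

variable {n : Type*} [Fintype n] [DecidableEq n]

lemma map_normSq_mem_doublyStochastic {U : Matrix n n ℂ} (hU : U ∈ unitaryGroup n ℂ) :
    U.map Complex.normSq ∈ doublyStochastic ℝ n := by
  refine mem_doublyStochastic_iff_sum.mpr
    ⟨fun i j => Complex.normSq_nonneg _, fun i => ?_, fun j => ?_⟩
  · have hrow := congrFun₂ (mem_unitaryGroup_iff.mp hU) i i
    simp only [mul_apply, star_apply, one_apply_eq, RCLike.star_def, Complex.mul_conj] at hrow
    exact_mod_cast hrow
  · have hcol := congrFun₂ (mem_unitaryGroup_iff'.mp hU) j j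
    simp only [mul_apply, star_apply, one_apply_eq, RCLike.star_def, mul_comm (starRingEnd ℂ _),
      Complex.mul_conj] at hcol
    exact_mod_cast hcol

lemma re_unitary_conj_diagonal_apply_self (U : Matrix n n ℂ) (d : n → ℝ) (i : n) :
    ((U * diagonal (fun k => (d k : ℂ)) * star U) i i).re =
      (U.map Complex.normSq *ᵥ d) i := by
  rw [Matrix.mul_apply, Complex.re_sum]
  refine Finset.sum_congr rfl fun k _ => ?_
  rw [mul_diagonal, star_apply, RCLike.star_def, mul_right_comm, Complex.mul_conj,
    ← Complex.ofReal_mul, Complex.ofReal_re]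
  rfl

lemma sum_le_sum_mulVec_of_mem_doublyStochastic {s : Set ℝ} {f : ℝ → ℝ} (hf : ConcaveOn ℝ s f)
    {M : Matrix n n ℝ} (hM : M ∈ doublyStochastic ℝ n) {x : n → ℝ} (hx : ∀ k, x k ∈ s) :
    ∑ k, f (x k) ≤ ∑ i, f ((M *ᵥ x) i) := calc
  ∑ k, f (x k) = ∑ k, ∑ i, M i k * f (x k) := by
    simp only [← Finset.sum_mul, sum_col_of_mem_doublyStochastic hM, one_mul]
  _ = ∑ i, ∑ k, M i k * f (x k) := Finset.sum_comm
  _ ≤ ∑ i, f ((M *ᵥ x) i) := Finset.sum_le_sum fun i _ =>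
    hf.le_map_sum (fun _ _ => nonneg_of_mem_doublyStochastic hM)
      (sum_row_of_mem_doublyStochastic hM i) fun k _ => hx k

omit [DecidableEq n] in
lemma vonNeumannEntropy_le_sum_negMulLog_diag {ρ : Matrix n n ℂ} (h : ρ.PosSemidef) :
    vonNeumannEntropy ρ ≤ (∑ i, (ρ i i).re.negMulLog) / Real.log 2 := by
  have hdiag (i : n) : (ρ i i).re =
      ((h.1.eigenvectorUnitary : Matrix n n ℂ).map Complex.normSq *ᵥ h.1.eigenvalues) i := by
    rw [← re_unitary_conj_diagonal_apply_self]
    exact congrArg (fun M : Matrix n n ℂ => (M i i).re) h.1.spectral_theorem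
  simp only [vonNeumannEntropy_eq_sum_eigenvalues h.1, hdiag]
  refine div_le_div_of_nonneg_right ?_ (Real.log_nonneg one_le_two)
  exact sum_le_sum_mulVec_of_mem_doublyStochastic Real.concaveOn_negMulLog
    (map_normSq_mem_doublyStochastic h.1.eigenvectorUnitary.2) h.eigenvalues_nonneg

end Schur

section PartialTrace

variable {A E : Type*} [Fintype A] [Fintype E]

lemma ptraceL_eq_sum_submatrix (ρ : Matrix (A × E) (A × E) ℂ) :
    ptraceL ρ = ∑ a, ρ.submatrix (Prod.mk a) (Prod.mk a) := by
  ext i j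
  rw [Matrix.sum_apply]
  rfl

lemma isHermitian_ptraceL {ρ : Matrix (A × E) (A × E) ℂ} (h : ρ.IsHermitian) :
    (ptraceL ρ).IsHermitian := by
  rw [ptraceL_eq_sum_submatrix, IsHermitian, conjTranspose_sum]
  exact Finset.sum_congr rfl fun a _ => h.submatrix _

lemma posSemidef_ptraceL {ρ : Matrix (A × E) (A × E) ℂ} (h : ρ.PosSemidef) :
    (ptraceL ρ).PosSemidef := by
  rw [ptraceL_eq_sum_submatrix]
  exact posSemidef_sum _ fun a _ => h.submatrix _

lemma trace_ptraceL (ρ : Matrix (A × E) (A × E) ℂ) : (ptraceL ρ).trace = ρ.trace := by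
  simp only [trace, diag_apply, ptraceL, Fintype.sum_prod_type_right]

lemma ptraceL_one_kronecker_mul_mul (V W : Matrix E E ℂ) (ρ : Matrix (A × E) (A × E) ℂ) :
    ptraceL ((1 ⊗ₖ V) * ρ * (1 ⊗ₖ W)) = V * ptraceL ρ * W := by
  rw [ptraceL_eq_sum_submatrix, ptraceL_eq_sum_submatrix, Finset.mul_sum, Finset.sum_mul]
  refine Finset.sum_congr rfl fun a _ => ?_
  ext i j
  simp [mul_apply, Fintype.sum_prod_type, one_apply]

end PartialTrace

section DimensionBounds

variable {A E R : Type*} [Fintype A] [Fintype E] [Fintype R]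

lemma sum_negMulLog_le {ι : Type*} (s : Finset ι) {p : ι → ℝ} (hp : ∀ i ∈ s, 0 ≤ p i) :
    ∑ i ∈ s, (p i).negMulLog ≤
      (∑ i ∈ s, p i).negMulLog + (∑ i ∈ s, p i) * Real.log s.card := by
  rcases s.eq_empty_or_nonempty with rfl | hs
  · simp
  have hc : (0 : ℝ) < s.card := by exact_mod_cast hs.card_pos
  have hjensen := Real.concaveOn_negMulLog.le_map_sum (w := fun _ => (s.card : ℝ)⁻¹)
    (fun _ _ => (inv_pos.mpr hc).le) (by simp [hc.ne']) hp
  simp only [smul_eq_mul, ← Finset.mul_sum, Real.negMulLog_mul] at hjensen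
  have hinv : ((s.card : ℝ)⁻¹).negMulLog = (s.card : ℝ)⁻¹ * Real.log s.card := by
    rw [Real.negMulLog, Real.log_inv, neg_mul_neg]
  rw [hinv, mul_left_comm, ← mul_add, mul_le_mul_iff_right₀ (inv_pos.mpr hc)] at hjensen
  rwa [add_comm]

lemma vonNeumannEntropy_le_sum_negMulLog_diag_ptraceL {ρ : Matrix (A × E) (A × E) ℂ}
    (h : ρ.PosSemidef) :
    vonNeumannEntropy ρ ≤ (∑ e, (ptraceL ρ e e).re.negMulLog) / Real.log 2 +
      ρ.trace.re * Real.logb 2 (Fintype.card A) := by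
  have hnonneg (x : A × E) : 0 ≤ (ρ x x).re := (Complex.le_def.mp h.diag_nonneg).1
  have htrace : ∑ e, ∑ a, (ρ (a, e) (a, e)).re = ρ.trace.re := by
    simp only [trace, diag_apply, Complex.re_sum, Fintype.sum_prod_type_right]
  refine (vonNeumannEntropy_le_sum_negMulLog_diag h).trans ?_
  rw [Real.logb, mul_div_assoc', ← add_div, Fintype.sum_prod_type_right, ← htrace,
    Finset.sum_mul, ← Finset.sum_add_distrib]
  gcongr with e
  simpa only [ptraceL, Complex.re_sum, Finset.card_univ] using
    sum_negMulLog_le Finset.univ fun a _ => hnonneg (a, e)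

theorem vonNeumannEntropy_le_ptraceL_add {ρ : Matrix (A × E) (A × E) ℂ} (h : ρ.PosSemidef) :
    vonNeumannEntropy ρ ≤
      vonNeumannEntropy (ptraceL ρ) + ρ.trace.re * Real.logb 2 (Fintype.card A) := by
  have hE := isHermitian_ptraceL h.1
  set U := hE.eigenvectorUnitary.1
  set W : Matrix (A × E) (A × E) ℂ := 1 ⊗ₖ star U
  have hW : W ∈ unitaryGroup (A × E) ℂ :=
    kronecker_mem_unitary (one_mem _) (Unitary.star_mem hE.eigenvectorUnitary.2)
  have hWstar : star W = 1 ⊗ₖ U := by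
    simp only [W, star_eq_conjTranspose, conjTranspose_kronecker, conjTranspose_one,
      conjTranspose_conjTranspose]
  have hdiag : ptraceL (W * ρ * star W) = diagonal fun e => (hE.eigenvalues e : ℂ) := by
    rw [hWstar, ptraceL_one_kronecker_mul_mul]
    simpa only [Unitary.conjStarAlgAut_star_apply] using! hE.conjStarAlgAut_star_eigenvectorUnitary
  have htrace : (W * ρ * star W).trace = ρ.trace := by
    rw [trace_mul_comm, ← Matrix.mul_assoc, mem_unitaryGroup_iff'.mp hW, Matrix.one_mul]
  have hbound := vonNeumannEntropy_le_sum_negMulLog_diag_ptraceL (h.mul_mul_conjTranspose_same W)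
  rw [← star_eq_conjTranspose, vonNeumannEntropy_unitary_conj h.1 hW, hdiag, htrace] at hbound
  simpa only [diagonal_apply_eq, Complex.ofReal_re,
    ← vonNeumannEntropy_eq_sum_eigenvalues hE] using hbound

/-- `X (a, e) r` are the amplitudes of a pure state of `A E R`; `regroup X` displays the same
amplitudes along the cut `E` versus `A R`, where `X` displays them along `A E` versus `R`. -/
def regroup (X : Matrix (A × E) R ℂ) : Matrix E (A × R) ℂ :=
  of fun e x => X (x.1, e) x.2

lemma ptraceL_mul_conjTranspose_self (X : Matrix (A × E) R ℂ) :
    ptraceL (X * Xᴴ) = regroup X * (regroup X)ᴴ := by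
  ext i j
  simp only [ptraceL, regroup, mul_apply, conjTranspose_apply, of_apply, Fintype.sum_prod_type]

lemma ptraceL_conjTranspose_regroup_mul_regroup (X : Matrix (A × E) R ℂ) :
    ptraceL ((regroup X)ᴴ * regroup X) = Xᴴ * X := by
  ext i j
  simp only [ptraceL, regroup, mul_apply, conjTranspose_apply, of_apply, Fintype.sum_prod_type]

open scoped MatrixOrder Matrix.Norms.L2Operator in
lemma exists_eq_mul_conjTranspose_self {n : Type*} [Fintype n] {ρ : Matrix n n ℂ}
    (h : ρ.PosSemidef) : ∃ X : Matrix n n ℂ, ρ = X * Xᴴ :=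
  CStarAlgebra.nonneg_iff_eq_mul_star_self.mp h.nonneg

theorem vonNeumannEntropy_ptraceL_le_add {ρ : Matrix (A × E) (A × E) ℂ} (h : ρ.PosSemidef) :
    vonNeumannEntropy (ptraceL ρ) ≤
      vonNeumannEntropy ρ + ρ.trace.re * Real.logb 2 (Fintype.card A) := by
  obtain ⟨X, rfl⟩ := exists_eq_mul_conjTranspose_self h
  have hbound := vonNeumannEntropy_le_ptraceL_add (posSemidef_conjTranspose_mul_self (regroup X))
  rwa [← trace_ptraceL, ptraceL_conjTranspose_regroup_mul_regroup, trace_mul_comm,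
    ← vonNeumannEntropy_mul_conjTranspose_self X, ← vonNeumannEntropy_mul_conjTranspose_self,
    ← ptraceL_mul_conjTranspose_self] at hbound

end DimensionBounds

section Marginals

variable {A B E E' : Type*} [Fintype B]

lemma margAE_eq_sum_submatrix (ρ : Matrix (A × B × E) (A × B × E) ℂ) :
    margAE ρ = ∑ b, ρ.submatrix (fun x => (x.1, b, x.2)) fun x => (x.1, b, x.2) := by
  ext x y
  rw [Matrix.sum_apply]
  rfl

lemma isHermitian_margAE {ρ : Matrix (A × B × E) (A × B × E) ℂ} (h : ρ.IsHermitian) :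
    (margAE ρ).IsHermitian := by
  rw [margAE_eq_sum_submatrix, IsHermitian, conjTranspose_sum]
  exact Finset.sum_congr rfl fun b _ => h.submatrix _

lemma posSemidef_margAE {ρ : Matrix (A × B × E) (A × B × E) ℂ} (h : ρ.PosSemidef) :
    (margAE ρ).PosSemidef := by
  rw [margAE_eq_sum_submatrix]
  exact posSemidef_sum _ fun b _ => h.submatrix _

variable [Fintype A] [Fintype E] [Fintype E']

lemma trace_margAE (ρ : Matrix (A × B × E) (A × B × E) ℂ) : (margAE ρ).trace = ρ.trace := by
  simp only [trace, diag_apply, margAE, Fintype.sum_prod_type]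
  exact Finset.sum_congr rfl fun a _ => Finset.sum_comm

lemma margBE_eq_ptraceL (ρ : Matrix (A × B × E) (A × B × E) ℂ) : margBE ρ = ptraceL ρ :=
  rfl

lemma margE_eq_ptraceL_margAE (ρ : Matrix (A × B × E) (A × B × E) ℂ) :
    margE ρ = ptraceL (margAE ρ) :=
  rfl

theorem neg_le_condMutualInfo {ρ : Matrix (A × B × E) (A × B × E) ℂ} (h : ρ.PosSemidef) :
    -(2 * (ρ.trace.re * Real.logb 2 (Fintype.card A))) ≤ condMutualInfo ρ := by
  have hABE := vonNeumannEntropy_le_ptraceL_add h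
  have hE := vonNeumannEntropy_ptraceL_le_add (posSemidef_margAE h)
  rw [← margBE_eq_ptraceL] at hABE
  rw [← margE_eq_ptraceL_margAE, trace_margAE] at hE
  rw [condMutualInfo]
  linarith

lemma condMutualInfo_submatrix {ρ : Matrix (A × B × E) (A × B × E) ℂ} (h : ρ.IsHermitian)
    (e : E' ≃ E) :
    condMutualInfo (ρ.submatrix (Prod.map id (Prod.map id e)) (Prod.map id (Prod.map id e))) =
      condMutualInfo ρ := by
  have hAE := vonNeumannEntropy_submatrix (isHermitian_margAE h) (.prodCongr (.refl A) e)
  have hBE := vonNeumannEntropy_submatrix (isHermitian_ptraceL h) (.prodCongr (.refl B) e)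
  have hABE := vonNeumannEntropy_submatrix h (.prodCongr (.refl A) (.prodCongr (.refl B) e))
  have hE := vonNeumannEntropy_submatrix (isHermitian_ptraceL (isHermitian_margAE h)) e
  exact congrArg₂ _ (congrArg₂ _ (congrArg₂ _ hAE hBE) hABE) hE

end Marginals

section TensorProduct

variable {A A' B B' E E' : Type*}

/-- The reordering of factors under which a product of systems `A B E` and `A' B' E'` becomes a
system with parts `A A'`, `B B'` and `E E'`. -/
def prodTripleComm (A A' B B' E E' : Type*) :
    (A × A') × (B × B') × (E × E') ≃ (A × B × E) × (A' × B' × E') :=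
  (Equiv.prodCongr (.refl _) (.prodProdProdComm B B' E E')).trans
    (.prodProdProdComm A A' (B × E) (B' × E'))

/-- The tensor product `ρ ⊗ σ` of tripartite operators, regarded as tripartite with parts `A A'`,
`B B'` and `E E'`. -/
def tripartiteKronecker (ρ : Matrix (A × B × E) (A × B × E) ℂ)
    (σ : Matrix (A' × B' × E') (A' × B' × E') ℂ) :
    Matrix ((A × A') × (B × B') × (E × E')) ((A × A') × (B × B') × (E × E')) ℂ :=
  (ρ ⊗ₖ σ).submatrix (prodTripleComm A A' B B' E E') (prodTripleComm A A' B B' E E')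

variable (ρ : Matrix (A × B × E) (A × B × E) ℂ) (σ : Matrix (A' × B' × E') (A' × B' × E') ℂ)

lemma margAB_tripartiteKronecker [Fintype E] [Fintype E'] :
    margAB (tripartiteKronecker ρ σ) =
      reindex (.prodProdProdComm A B A' B') (.prodProdProdComm A B A' B')
        (margAB ρ ⊗ₖ margAB σ) := by
  ext x y
  simp only [margAB, reindex_apply, submatrix_apply, kroneckerMap_apply, Finset.sum_mul_sum,
    Fintype.sum_prod_type]
  rfl

lemma margAE_tripartiteKronecker [Fintype B] [Fintype B'] :
    margAE (tripartiteKronecker ρ σ) =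
      (margAE ρ ⊗ₖ margAE σ).submatrix (Equiv.prodProdProdComm A A' E E')
        (Equiv.prodProdProdComm A A' E E') := by
  ext x y
  simp only [margAE, submatrix_apply, kroneckerMap_apply, Finset.sum_mul_sum,
    Fintype.sum_prod_type]
  rfl

lemma margBE_tripartiteKronecker [Fintype A] [Fintype A'] :
    margBE (tripartiteKronecker ρ σ) =
      (margBE ρ ⊗ₖ margBE σ).submatrix (Equiv.prodProdProdComm B B' E E')
        (Equiv.prodProdProdComm B B' E E') := by
  ext x y
  simp only [margBE, submatrix_apply, kroneckerMap_apply, Finset.sum_mul_sum,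
    Fintype.sum_prod_type]
  rfl

variable [Fintype A] [Fintype A'] [Fintype B] [Fintype B']

lemma margE_tripartiteKronecker :
    margE (tripartiteKronecker ρ σ) = margE ρ ⊗ₖ margE σ := by
  ext x y
  simp only [margE, kroneckerMap_apply, Finset.sum_mul_sum, Fintype.sum_prod_type]
  rfl

variable [Fintype E] [Fintype E'] {ρ σ}

theorem condMutualInfo_tripartiteKronecker (hρ : ρ.IsHermitian) (hσ : σ.IsHermitian) :
    condMutualInfo (tripartiteKronecker ρ σ) =
      σ.trace.re * condMutualInfo ρ + ρ.trace.re * condMutualInfo σ := by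
  have hAE := isHermitian_margAE hρ
  have hAE' := isHermitian_margAE hσ
  have hBE : (margBE ρ).IsHermitian := isHermitian_ptraceL hρ
  have hBE' : (margBE σ).IsHermitian := isHermitian_ptraceL hσ
  have hE : (margE ρ).IsHermitian := isHermitian_ptraceL hAE
  have hE' : (margE σ).IsHermitian := isHermitian_ptraceL hAE'
  rw [condMutualInfo, margAE_tripartiteKronecker, margBE_tripartiteKronecker,
    margE_tripartiteKronecker, tripartiteKronecker,
    vonNeumannEntropy_submatrix (isHermitian_kronecker hAE hAE'),
    vonNeumannEntropy_submatrix (isHermitian_kronecker hBE hBE'),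
    vonNeumannEntropy_submatrix (isHermitian_kronecker hρ hσ),
    vonNeumannEntropy_kronecker hAE hAE', vonNeumannEntropy_kronecker hBE hBE',
    vonNeumannEntropy_kronecker hρ hσ, vonNeumannEntropy_kronecker hE hE']
  simp only [margBE_eq_ptraceL, margE_eq_ptraceL_margAE, trace_ptraceL, trace_margAE,
    condMutualInfo]
  ring

end TensorProduct

namespace IsState

variable {m n : Type*} [Fintype m] [Fintype n]

lemma submatrix {ρ : Matrix n n ℂ} (h : IsState ρ) (e : m ≃ n) : IsState (ρ.submatrix e e) :=
  ⟨h.1.submatrix e, (Equiv.sum_comp e fun i => ρ i i).trans h.2⟩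

lemma kronecker {ρ : Matrix m m ℂ} {σ : Matrix n n ℂ} (hρ : IsState ρ) (hσ : IsState σ) :
    IsState (ρ ⊗ₖ σ) :=
  ⟨hρ.1.kronecker hσ.1, by rw [trace_kronecker, hρ.2, hσ.2, one_mul]⟩

end IsState

section SquashedValues

variable {A A' B B' E : Type*} [Fintype A] [Fintype A'] [Fintype B] [Fintype B'] [Fintype E]

/-- The values `(1/2) I(A;B|E)` over all finite-dimensional extensions of `ρ`; the squashed
entanglement of `ρ` is their infimum. As in `Esq`, the extending systems are indexed by `Fin d`. -/
def squashedValues (ρ : Matrix (A × B) (A × B) ℂ) : Set ℝ :=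
  {x | ∃ (d : ℕ) (ρE : Matrix (A × B × Fin d) (A × B × Fin d) ℂ),
    IsState ρE ∧ margAB ρE = ρ ∧ x = (1 / 2) * condMutualInfo ρE}

lemma esq_eq_sInf_squashedValues (ρ : Matrix (A × B) (A × B) ℂ) :
    Esq ρ = sInf (squashedValues ρ) :=
  rfl

lemma half_condMutualInfo_mem_squashedValues {τ : Matrix (A × B × E) (A × B × E) ℂ}
    (h : IsState τ) : (1 / 2) * condMutualInfo τ ∈ squashedValues (margAB τ) := by
  let e : Fin (Fintype.card E) ≃ E := (Fintype.equivFin E).symm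
  refine ⟨_, τ.submatrix (Prod.map id (Prod.map id e)) (Prod.map id (Prod.map id e)),
    h.submatrix (.prodCongr (.refl A) (.prodCongr (.refl B) e)), ?_, ?_⟩
  · ext x y
    exact Equiv.sum_comp e fun k => τ (x.1, x.2, k) (y.1, y.2, k)
  · rw [condMutualInfo_submatrix h.1.1]

lemma squashedValues_nonempty {ρ : Matrix (A × B) (A × B) ℂ} (h : IsState ρ) :
    (squashedValues ρ).Nonempty := by
  let e : A × B × Unit ≃ A × B := .prodCongr (.refl A) (.prodPUnit B)
  have hmarg : margAB (ρ.submatrix e e) = ρ := by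
    ext x y
    exact Fintype.sum_unique _
  exact ⟨_, hmarg ▸ half_condMutualInfo_mem_squashedValues (h.submatrix e)⟩

lemma bddBelow_squashedValues (ρ : Matrix (A × B) (A × B) ℂ) : BddBelow (squashedValues ρ) := by
  refine ⟨-Real.logb 2 (Fintype.card A), ?_⟩
  rintro _ ⟨d, τ, hτ, -, rfl⟩
  have hbound := neg_le_condMutualInfo hτ.1
  rw [hτ.2, Complex.one_re] at hbound
  linarith

open scoped Pointwise in
lemma squashedValues_add_subset (ρ : Matrix (A × B) (A × B) ℂ)
    (ρ' : Matrix (A' × B') (A' × B') ℂ) :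
    squashedValues ρ + squashedValues ρ' ⊆
      squashedValues (reindex (.prodProdProdComm A B A' B') (.prodProdProdComm A B A' B')
        (ρ ⊗ₖ ρ')) := by
  rintro _ ⟨_, ⟨d, τ, hτ, rfl, rfl⟩, _, ⟨d', σ, hσ, rfl, rfl⟩, rfl⟩
  have hstate : IsState (tripartiteKronecker τ σ) := (hτ.kronecker hσ).submatrix _
  have hadd : condMutualInfo (tripartiteKronecker τ σ) =
      condMutualInfo τ + condMutualInfo σ := by
    rw [condMutualInfo_tripartiteKronecker hτ.1.1 hσ.1.1, hτ.2, hσ.2, Complex.one_re, one_mul,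
      one_mul]
  have hmem := half_condMutualInfo_mem_squashedValues hstate
  rwa [hadd, mul_add, margAB_tripartiteKronecker] at hmem

end SquashedValues

/-- Squashed entanglement is subadditive on tensor products:
`E_sq(ρ^{AB} ⊗ ρ^{A'B'}) ≤ E_sq(ρ^{AB}) + E_sq(ρ^{A'B'})`, where the tensor product is
regarded as a bipartite state with respect to the cut `AA'` versus `BB'`. -/
theorem squashedEntanglement_subadditive_tensor
    {A A' B B' : Type*} [Fintype A] [Fintype A'] [Fintype B] [Fintype B']
    (ρ : Matrix (A × B) (A × B) ℂ) (ρ' : Matrix (A' × B') (A' × B') ℂ)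
    (hρ : IsState ρ) (hρ' : IsState ρ') :
    Esq (Matrix.reindex (Equiv.prodProdProdComm A B A' B') (Equiv.prodProdProdComm A B A' B')
          (ρ ⊗ₖ ρ'))
      ≤ Esq ρ + Esq ρ' := by
  simp only [esq_eq_sInf_squashedValues]
  rw [← csInf_add (squashedValues_nonempty hρ) (bddBelow_squashedValues ρ)
    (squashedValues_nonempty hρ') (bddBelow_squashedValues ρ')]
  exact csInf_le_csInf (bddBelow_squashedValues _)
    ((squashedValues_nonempty hρ).add (squashedValues_nonempty hρ'))
    (squashedValues_add_subset ρ ρ')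

end
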